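/- Let H be a real Hilbert space, let λ ∈ [0,∞), s ∈ {−1,1}, let J be a unitary operator on H, and let n ∈ H be a unit vector. Then W_{λ,∞}[s,n,J] is a continuous linear bijection of M(H) onto M(H), whose (continuous linear) inverse is W_{λ,∞}[s,Jn,J⁻¹]. -/

import Mathlib

open scoped InnerProductSpace

/-- Generalized Lorentz transform `W_{λ,c}[s,n,J]` on `M(H) = ℝ × H` (case `λ < ∞`, `c < ∞`). -/
noncomputable def Wfin {H : Type*} [NormedAddCommGroup H] [InnerProductSpace ℝ H]
    (lam c s : ℝ) (n : H) (J : H ≃ₗᵢ[ℝ] H) (w : ℝ × H) : ℝ × H :=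
  ((s * w.1 - lam / c ^ 2 * ⟪n, w.2⟫_ℝ) / Real.sqrt |1 - lam ^ 2 / c ^ 2|,
    J (((lam * w.1 - s * ⟪n, w.2⟫_ℝ) / Real.sqrt |1 - lam ^ 2 / c ^ 2|) • n
      + (w.2 - ⟪n, w.2⟫_ℝ • n)))

/-- Generalized Lorentz transform `W_{λ,∞}[s,n,J]` on `M(H) = ℝ × H` (case `c = ∞`). -/
noncomputable def Wgal {H : Type*} [NormedAddCommGroup H] [InnerProductSpace ℝ H]
    (lam s : ℝ) (n : H) (J : H ≃ₗᵢ[ℝ] H) (w : ℝ × H) : ℝ × H :=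
  (s * w.1, J ((lam * w.1 - s * ⟪n, w.2⟫_ℝ) • n + (w.2 - ⟪n, w.2⟫_ℝ • n)))

/-- Generalized Lorentz transform `W_{∞,c}[s,n,J]` on `M(H) = ℝ × H` (case `λ = ∞`). -/
noncomputable def Wtach {H : Type*} [NormedAddCommGroup H] [InnerProductSpace ℝ H]
    (c s : ℝ) (n : H) (J : H ≃ₗᵢ[ℝ] H) (w : ℝ × H) : ℝ × H :=
  (-⟪n, w.2⟫_ℝ / c, J ((c * w.1) • n + (w.2 - ⟪n, w.2⟫_ℝ • n)))

/-!
On the space component, `W_{λ,∞}[s,n,J]` is `J (λ t n + S x)`, where `S` scales the line `ℝ n` by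
`-s` and fixes its orthogonal complement. Scalings along `n` multiply and are intertwined by `J`, so
`W_{μ,∞}[r,Jn,K] ∘ W_{λ,∞}[s,n,J]` scales time by `r s`, boosts by `(μ s - r λ) t` along `n` and
scales space by `r s` along `n`, before applying `K J`. For `μ = λ`, `r = s = ±1` and `K = J⁻¹` the
boost cancels and both scalings are trivial.
-/

section AxialScaling

variable {E F : Type*} [NormedAddCommGroup E] [InnerProductSpace ℝ E]
  [NormedAddCommGroup F] [InnerProductSpace ℝ F]

/-- Scaling by `a` along the line of the unit vector `n`, fixing the orthogonal complement of `n`.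
It is the space part of `Wgal`, with `a = -s`. -/
noncomputable def axialScaling (a : ℝ) (n : E) : E →L[ℝ] E :=
  ContinuousLinearMap.id ℝ E + ((a - 1) • innerSL ℝ n).smulRight n

theorem axialScaling_apply (a : ℝ) (n x : E) :
    axialScaling a n x = x + ((a - 1) * ⟪n, x⟫_ℝ) • n := by
  simp [axialScaling]

theorem axialScaling_one (n x : E) : axialScaling 1 n x = x := by
  simp [axialScaling_apply]

theorem axialScaling_self (a : ℝ) {n : E} (hn : ‖n‖ = 1) : axialScaling a n n = a • n := by
  rw [axialScaling_apply, inner_self_eq_one_of_norm_eq_one hn]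
  module

theorem axialScaling_axialScaling (a b : ℝ) {n : E} (hn : ‖n‖ = 1) (x : E) :
    axialScaling a n (axialScaling b n x) = axialScaling (a * b) n x := by
  rw [axialScaling_apply b, map_add, map_smul, axialScaling_self a hn, axialScaling_apply,
    axialScaling_apply]
  module

theorem axialScaling_map (a : ℝ) (J : E →ₗᵢ[ℝ] F) (n x : E) :
    axialScaling a (J n) (J x) = J (axialScaling a n x) := by
  simp only [axialScaling_apply, J.inner_map_map, map_add, map_smul]

end AxialScaling

namespace Wgal

variable {H : Type*} [NormedAddCommGroup H] [InnerProductSpace ℝ H]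

theorem eq_axialScaling (lam s : ℝ) (n : H) (J : H ≃ₗᵢ[ℝ] H) (w : ℝ × H) :
    Wgal lam s n J w = (s * w.1, J ((lam * w.1) • n + axialScaling (-s) n w.2)) := by
  rw [Wgal, axialScaling_apply]
  congr 2
  module

theorem apply_apply (mu lam r s : ℝ) (J K : H ≃ₗᵢ[ℝ] H) {n : H} (hn : ‖n‖ = 1) (w : ℝ × H) :
    Wgal mu r (J n) K (Wgal lam s n J w) =
      (r * s * w.1, K (J (((mu * s - r * lam) * w.1) • n + axialScaling (r * s) n w.2))) := by
  have space_part : axialScaling (-r) n ((lam * w.1) • n + axialScaling (-s) n w.2) =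
      (-(r * lam) * w.1) • n + axialScaling (r * s) n w.2 := by
    rw [map_add, map_smul, axialScaling_self _ hn, axialScaling_axialScaling _ _ hn, neg_mul_neg]
    module
  have intertwine (x : H) : axialScaling (-r) (J n) (J x) = J (axialScaling (-r) n x) :=
    axialScaling_map (-r) J.toLinearIsometry n x
  rw [eq_axialScaling, eq_axialScaling, intertwine, space_part, ← map_smul, ← map_add, mul_assoc]
  congr 3
  module

theorem leftInverse (lam : ℝ) {s : ℝ} (hs : s * s = 1) (J : H ≃ₗᵢ[ℝ] H) {n : H} (hn : ‖n‖ = 1) :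
    Function.LeftInverse (Wgal lam s (J n) J.symm) (Wgal lam s n J) := fun w => by
  simp [apply_apply lam lam s s J J.symm hn, hs, mul_comm lam s, axialScaling_one]

theorem rightInverse (lam : ℝ) {s : ℝ} (hs : s * s = 1) (J : H ≃ₗᵢ[ℝ] H) {n : H} (hn : ‖n‖ = 1) :
    Function.RightInverse (Wgal lam s (J n) J.symm) (Wgal lam s n J) := by
  have left_inv_symm := leftInverse lam hs J.symm ((J.norm_map n).trans hn)
  rwa [J.symm_apply_apply, J.symm_symm] at left_inv_symm

/-- The transform `W_{λ,∞}[s,n,J]` as a continuous linear map, assembled from its time part, boost,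
and space part so that linearity and continuity need no separate proof. -/
noncomputable def toCLM (lam s : ℝ) (n : H) (J : H ≃ₗᵢ[ℝ] H) : (ℝ × H) →L[ℝ] (ℝ × H) :=
  (s • ContinuousLinearMap.fst ℝ ℝ H).prod
    ((J : H →L[ℝ] H) ∘L
      ((lam • ContinuousLinearMap.fst ℝ ℝ H).smulRight n +
        axialScaling (-s) n ∘L ContinuousLinearMap.snd ℝ ℝ H))

theorem coe_toCLM (lam s : ℝ) (n : H) (J : H ≃ₗᵢ[ℝ] H) : ⇑(toCLM lam s n J) = Wgal lam s n J := by
  ext1 w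
  simp [toCLM, eq_axialScaling]

end Wgal

theorem stmt1_general {H : Type*} [NormedAddCommGroup H] [InnerProductSpace ℝ H]
    (lam s : ℝ) (hs : s = 1 ∨ s = -1) (J : H ≃ₗᵢ[ℝ] H) (n : H) (hn : ‖n‖ = 1) :
    Function.Bijective (Wgal lam s n J) ∧
    (∃ A : (ℝ × H) →L[ℝ] (ℝ × H), ∀ w, A w = Wgal lam s n J w) ∧
    (∃ B : (ℝ × H) →L[ℝ] (ℝ × H), ∀ w, B w = Wgal lam s (J n) J.symm w) ∧
    (∀ w, Wgal lam s (J n) J.symm (Wgal lam s n J w) = w) ∧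
    (∀ w, Wgal lam s n J (Wgal lam s (J n) J.symm w) = w) := by
  have hss : s * s = 1 := mul_self_eq_one_iff.mpr hs
  have left_inv := Wgal.leftInverse lam hss J hn
  have right_inv := Wgal.rightInverse lam hss J hn
  exact ⟨⟨left_inv.injective, right_inv.surjective⟩,
    ⟨Wgal.toCLM lam s n J, congrFun (Wgal.coe_toCLM lam s n J)⟩,
    ⟨Wgal.toCLM lam s (J n) J.symm, congrFun (Wgal.coe_toCLM lam s (J n) J.symm)⟩,
    left_inv, right_inv⟩

/-- `W_{λ,∞}[s,n,J]` is a continuous linear bijection of `M(H)` onto itself,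
whose (continuous linear) inverse is `W_{λ,∞}[s,Jn,J⁻¹]`. -/
theorem stmt1 {H : Type*} [NormedAddCommGroup H] [InnerProductSpace ℝ H] [CompleteSpace H]
    (lam : ℝ) (hlam : 0 ≤ lam) (s : ℝ) (hs : s = 1 ∨ s = -1)
    (J : H ≃ₗᵢ[ℝ] H) (n : H) (hn : ‖n‖ = 1) :
    Function.Bijective (Wgal lam s n J) ∧
    (∃ A : (ℝ × H) →L[ℝ] (ℝ × H), ∀ w, A w = Wgal lam s n J w) ∧
    (∃ B : (ℝ × H) →L[ℝ] (ℝ × H), ∀ w, B w = Wgal lam s (J n) J.symm w) ∧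
    (∀ w, Wgal lam s (J n) J.symm (Wgal lam s n J w) = w) ∧
    (∀ w, Wgal lam s n J (Wgal lam s (J n) J.symm w) = w) :=
  stmt1_general lam s hs J n hn
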